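/- Let L ⊂ ℝ^n be a full-rank lattice and define the theta function Θ_L(x) = Σ_{l∈L} exp(−π Σ_{k=1}^n x_k l_k²) for x ∈ (ℝ₊)^n. Then Θ_L satisfies the functional equation Θ_L(x) = (vol(ℝ^n/L))⁻¹ · (x₁⋯xₙ)^{−1/2} · Θ_{L*}(1/x), where 1/x is the coordinate-wise reciprocal and L* is the dual lattice. -/

import Mathlib

open Real

/-!
Poisson summation for `ℤᵈ` holds because the Fourier coefficients of the periodization
`y ↦ ∑ m ∈ ℤᵈ, f (y + m)` are the values of `𝓕 f` at the integer points. Applied to `f ∘ A`, whose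
Fourier transform is `|det A|⁻¹ 𝓕 f ∘ (A⁻¹)ᵀ`, it relates sums over the lattice `A(ℤᵈ)` and its
dual. Since `x_k l_k²` is the square of `√x_k l_k`, passing from `A` to `diag(√x) A` reduces the
functional equation to the Gaussian `exp (-π ‖v‖²)`, which is its own Fourier transform.
-/

open Asymptotics Filter MeasureTheory Topology TopologicalSpace
open scoped FourierTransform InnerProductSpace

section LatticePoints

variable {d : Type*}

/-- The points of the standard lattice `ℤᵈ`, as vectors of Euclidean space. -/
def integerVector : (d → ℤ) →+ EuclideanSpace ℝ d where
  toFun m := WithLp.toLp 2 fun i => (m i : ℝ)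
  map_zero' := by ext; simp
  map_add' m k := by ext; simp

@[simp]
lemma integerVector_apply (m : d → ℤ) (i : d) : integerVector m i = m i :=
  rfl

lemma tendsto_integerVector_cofinite_cocompact [Finite d] :
    Tendsto (integerVector (d := d)) cofinite (cocompact (EuclideanSpace ℝ d)) := by
  have hpi : Tendsto (fun (m : d → ℤ) i => (m i : ℝ)) cofinite (cocompact (d → ℝ)) := by
    rw [← coprodᵢ_cofinite, ← coprodᵢ_cocompact]
    exact Tendsto.pi_map_coprodᵢ fun _ => Int.tendsto_coe_cofinite
  exact (PiLp.homeomorph 2 fun _ : d => ℝ).symm.isClosedEmbedding.tendsto_cocompact.comp hpi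

lemma summable_norm_integerVector_rpow [Fintype d] {r : ℝ} (hr : r < -Fintype.card d) :
    Summable fun m : d → ℤ => ‖integerVector m‖ ^ r := by
  let b := (EuclideanSpace.basisFun d ℝ).toBasis
  let e := (b.restrictScalars ℤ).equivFun.symm
  have hrank : Module.finrank ℤ (Submodule.span ℤ (Set.range b)) = Fintype.card d :=
    Module.finrank_eq_card_basis (b.restrictScalars ℤ)
  refine (e.toEquiv.summable_iff.2 (ZLattice.summable_norm_rpow _ r (hrank ▸ hr))).congr fun m => ?_
  have he : (e m : EuclideanSpace ℝ d) = integerVector m := by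
    classical
    ext i
    simp only [e, b, Module.Basis.equivFun_symm_apply, AddSubmonoidClass.coe_finsetSum,
      SetLike.val_smul, Module.Basis.restrictScalars_apply]
    simp [Pi.single_apply]
  simp [← he]

end LatticePoints

section RpowDecay

variable {V E : Type*} [NormedAddCommGroup V] [NormedAddCommGroup E]

lemma isBigO_norm_restrict_comp_addRight_cocompact [ProperSpace V] {f : C(V, E)} {b : ℝ}
    (hb : 0 ≤ b) (hf : f =O[cocompact V] fun v => ‖v‖ ^ (-b)) (K : Compacts V) :
    (fun v => ‖(f.comp (ContinuousMap.addRight v)).restrict K‖) =O[cocompact V]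
      fun v => ‖v‖ ^ (-b) := by
  obtain ⟨C, hC, hfC⟩ := hf.exists_pos
  obtain ⟨r, hr⟩ := hasBasis_cobounded_norm.eventually_iff.1
    (Metric.cobounded_eq_cocompact (α := V) ▸ hfC.bound)
  obtain ⟨R, hR, hKR⟩ := K.isCompact.isBounded.exists_pos_norm_le
  refine .of_bound (C * 2 ^ b) ?_
  filter_upwards [tendsto_norm_cocompact_atTop.eventually_gt_atTop (2 * max r R)] with v hv
  have hv0 : 0 < ‖v‖ := by linarith [le_max_right r R]
  rw [norm_norm, ContinuousMap.norm_le _ (by positivity)]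
  rintro ⟨y, hy⟩
  have hyv : ‖v‖ / 2 ≤ ‖y + v‖ := by
    have htriangle := norm_sub_le (y + v) y
    rw [add_sub_cancel_left] at htriangle
    linarith [hKR y hy, le_max_right r R]
  calc ‖f (y + v)‖ ≤ C * ‖‖y + v‖ ^ (-b)‖ := hr.2 (hyv.trans' (by linarith [le_max_left r R]))
    _ = C * ‖y + v‖ ^ (-b) := by rw [norm_of_nonneg (by positivity)]
    _ ≤ C * (‖v‖ / 2) ^ (-b) := by
        gcongr C * ?_
        exact rpow_le_rpow_of_nonpos (by positivity) hyv (by linarith)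
    _ = C * 2 ^ b * ‖‖v‖ ^ (-b)‖ := by
        rw [norm_of_nonneg (by positivity), div_rpow hv0.le two_pos.le, rpow_neg two_pos.le]
        field_simp

variable {d : Type*} [Fintype d]

lemma summable_comp_integerVector_of_rpow_decay [CompleteSpace E]
    {g : EuclideanSpace ℝ d → E} {b : ℝ} (hb : Fintype.card d < b)
    (hg : g =O[cocompact _] fun v => ‖v‖ ^ (-b)) : Summable fun m => g (integerVector m) :=
  summable_of_isBigO (summable_norm_integerVector_rpow (neg_lt_neg hb))
    (hg.comp_tendsto tendsto_integerVector_cofinite_cocompact)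

lemma summable_norm_restrict_integerVector_of_rpow_decay {f : C(EuclideanSpace ℝ d, E)} {b : ℝ}
    (hb : Fintype.card d < b) (hf : f =O[cocompact _] fun v => ‖v‖ ^ (-b))
    (K : Compacts (EuclideanSpace ℝ d)) :
    Summable fun m => ‖(f.comp (ContinuousMap.addRight (integerVector m))).restrict K‖ := by
  have hdecay := isBigO_norm_restrict_comp_addRight_cocompact ((Nat.cast_nonneg _).trans hb.le) hf K
  exact summable_of_isBigO (summable_norm_integerVector_rpow (neg_lt_neg hb))
    (hdecay.comp_tendsto tendsto_integerVector_cofinite_cocompact)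

end RpowDecay

section Torus

variable {d : Type*}

/-- The quotient map `ℝᵈ → ℝᵈ/ℤᵈ` onto the standard torus. -/
def toTorus : C(EuclideanSpace ℝ d, UnitAddTorus d) where
  toFun y i := (y i : UnitAddCircle)

@[simp]
lemma toTorus_apply (y : EuclideanSpace ℝ d) (i : d) : toTorus y i = (y i : UnitAddCircle) :=
  rfl

lemma toTorus_eq_toTorus_iff {y z : EuclideanSpace ℝ d} :
    toTorus y = toTorus z ↔ ∃ m, y + integerVector m = z := by
  have hcoord : ∀ i, toTorus y i = toTorus z i ↔ ∃ m : ℤ, y i + m = z i := fun i => by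
    rw [toTorus_apply, toTorus_apply, eq_comm, ← sub_eq_zero, ← AddCircle.coe_sub,
      AddCircle.coe_eq_zero_iff]
    simp [eq_sub_iff_add_eq']
  simp only [funext_iff, hcoord, Classical.skolem, PiLp.ext_iff, PiLp.add_apply,
    integerVector_apply]

lemma isQuotientMap_toTorus : IsQuotientMap (toTorus (d := d)) :=
  (IsOpenQuotientMap.piMap fun _ : d => QuotientAddGroup.isOpenQuotientMap_mk).isQuotientMap.comp
    (PiLp.homeomorph 2 fun _ : d => ℝ).isQuotientMap

/-- The half-open unit cube `(0, 1]ᵈ`, a fundamental domain for `ℤᵈ`. -/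
def unitCube (d : Type*) : Set (EuclideanSpace ℝ d) :=
  WithLp.ofLp ⁻¹' Set.univ.pi fun _ => Set.Ioc 0 1

lemma mem_unitCube {y : EuclideanSpace ℝ d} : y ∈ unitCube d ↔ ∀ i, y i ∈ Set.Ioc 0 1 :=
  Set.mem_univ_pi

lemma measurableSet_unitCube [Countable d] : MeasurableSet (unitCube d) :=
  (MeasurableEquiv.toLp 2 (d → ℝ)).symm.measurable (.univ_pi fun _ => measurableSet_Ioc)

lemma existsUnique_sub_integerVector_mem_unitCube (y : EuclideanSpace ℝ d) :
    ∃! m, y - integerVector m ∈ unitCube d := by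
  have hcoord (i : d) : ∃! m : ℤ, y i - m ∈ Set.Ioc 0 1 := by
    simpa using existsUnique_sub_zsmul_mem_Ioc one_pos (y i) 0
  choose m hm huniq using hcoord
  refine ⟨m, mem_unitCube.2 hm, fun k hk => ?_⟩
  ext i
  exact huniq i (k i) (mem_unitCube.1 hk i)

variable [Fintype d]

lemma mFourier_toTorus (k : d → ℤ) (y : EuclideanSpace ℝ d) :
    UnitAddTorus.mFourier k (toTorus y) = 𝐞 ⟪y, integerVector k⟫_ℝ := by
  simp only [UnitAddTorus.mFourier, ContinuousMap.coe_mk, toTorus_apply, fourier_coe_apply,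
    ← Complex.exp_sum, fourierChar_apply, PiLp.inner_apply]
  congr 1
  push_cast
  rw [Finset.mul_sum, Finset.sum_mul]
  exact Finset.sum_congr rfl fun i _ => by simp; ring

variable {E : Type*} [NormedAddCommGroup E]

lemma mFourierCoeff_eq_setIntegral_unitCube [NormedSpace ℂ E] (F : UnitAddTorus d → E) (k : d → ℤ) :
    UnitAddTorus.mFourierCoeff F k =
      ∫ y in unitCube d, 𝐞 (-⟪y, integerVector k⟫_ℝ) • F (toTorus y) := by
  have hcube : {x : d → ℝ | ∀ i, x i ∈ Set.Ioc ((0 : d → ℝ) i) ((0 : d → ℝ) i + 1)} =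
      Set.univ.pi fun _ => Set.Ioc 0 1 := by
    ext; simp
  rw [UnitAddTorus.mFourierCoeff_eq_integral F k 0, hcube,
    ← (PiLp.volume_preserving_ofLp d).setIntegral_preimage_emb
      (MeasurableEquiv.toLp 2 (d → ℝ)).symm.measurableEmbedding]
  refine setIntegral_congr_fun measurableSet_unitCube fun y _ => ?_
  rw [← inner_neg_right, ← map_neg, Circle.smul_def, ← mFourier_toTorus]
  rfl

lemma hasSum_setIntegral_unitCube_add [NormedSpace ℝ E]
    {f : EuclideanSpace ℝ d → E} (hf : Integrable f) :
    HasSum (fun m => ∫ y in unitCube d, f (y + integerVector m)) (∫ y, f y) := by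
  let cube (m : d → ℤ) : Set (EuclideanSpace ℝ d) := (· - integerVector m) ⁻¹' unitCube d
  have hmeas (m) : MeasurableSet (cube m) := measurableSet_unitCube.preimage (by fun_prop)
  have hdisj : Pairwise (Function.onFun Disjoint cube) := fun m m' hne =>
    Set.disjoint_left.2 fun y hy hy' =>
      hne ((existsUnique_sub_integerVector_mem_unitCube y).unique hy hy')
  have hcover : ⋃ m, cube m = Set.univ := Set.eq_univ_of_forall fun y =>
    Set.mem_iUnion.2 (existsUnique_sub_integerVector_mem_unitCube y).exists
  have hsum := hasSum_integral_iUnion hmeas hdisj hf.integrableOn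
  rw [hcover, setIntegral_univ] at hsum
  refine hsum.congr_fun fun m => ?_
  have htranslate := (measurePreserving_sub_right volume (integerVector m)).setIntegral_preimage_emb
    (measurableEmbedding_subRight _) (fun y => f (y + integerVector m)) (unitCube d)
  simpa only [sub_add_cancel] using htranslate.symm

end Torus

section Poisson

variable {d : Type*} [Fintype d]

lemma integrable_of_summable_norm_restrict_integerVector {E : Type*} [NormedAddCommGroup E]
    {f : C(EuclideanSpace ℝ d, E)}
    (hf : ∀ K : Compacts (EuclideanSpace ℝ d), Summable fun m =>
      ‖(f.comp (ContinuousMap.addRight (integerVector m))).restrict K‖) :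
    Integrable f := by
  let cube : Compacts (EuclideanSpace ℝ d) :=
    ⟨WithLp.toLp 2 '' Set.univ.pi fun _ => Set.Icc 0 1,
      (isCompact_univ_pi fun _ => isCompact_Icc).image (PiLp.continuous_toLp 2 _)⟩
  let translate (m : d → ℤ) : C(EuclideanSpace ℝ d, EuclideanSpace ℝ d) :=
    ContinuousMap.addRight (integerVector m)
  let cubeAt (m : d → ℤ) : Compacts (EuclideanSpace ℝ d) :=
    cube.map (translate m) (translate m).continuous
  have hvolume (m) : volume.real (cubeAt m : Set (EuclideanSpace ℝ d)) =
      volume.real (cube : Set (EuclideanSpace ℝ d)) := by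
    simp [cubeAt, translate, Measure.real]
  have hnorm (m) : ‖f.restrict (cubeAt m)‖ ≤ ‖(f.comp (translate m)).restrict cube‖ := by
    refine (ContinuousMap.norm_le _ (norm_nonneg _)).2 ?_
    rintro ⟨_, y, hy, rfl⟩
    exact ((f.comp (translate m)).restrict cube).norm_coe_le_norm ⟨y, hy⟩
  refine integrable_of_summable_norm_restrict (s := cubeAt) ?_ ?_
  · refine ((hf cube).mul_right (volume.real (cube : Set (EuclideanSpace ℝ d)))).of_nonneg_of_le
      (fun m => by positivity) fun m => ?_
    rw [hvolume]
    gcongr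
    exact hnorm m
  · refine Set.eq_univ_of_forall fun y => Set.mem_iUnion.2 ?_
    obtain ⟨m, hm⟩ := (existsUnique_sub_integerVector_mem_unitCube y).exists
    refine ⟨m, y - integerVector m, ⟨_, ?_, rfl⟩, sub_add_cancel _ _⟩
    exact fun i hi => Set.Ioc_subset_Icc_self (hm i hi)

lemma exists_continuousMap_toTorus_eq_tsum {E : Type*} [NormedAddCommGroup E] [CompleteSpace E]
    {f : C(EuclideanSpace ℝ d, E)}
    (hf : ∀ K : Compacts (EuclideanSpace ℝ d), Summable fun m =>
      ‖(f.comp (ContinuousMap.addRight (integerVector m))).restrict K‖) :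
    ∃ F : C(UnitAddTorus d, E), ∀ y, F (toTorus y) = ∑' m, f (y + integerVector m) := by
  let P : C(EuclideanSpace ℝ d, E) := ∑' m, f.comp (ContinuousMap.addRight (integerVector m))
  have hP (y) : P y = ∑' m, f (y + integerVector m) :=
    ContinuousMap.tsum_apply (ContinuousMap.summable_of_locally_summable_norm hf) y |>.symm
  have hperiodic : Function.FactorsThrough P toTorus := by
    intro y z hyz
    obtain ⟨k, rfl⟩ := toTorus_eq_toTorus_iff.1 hyz
    simp only [hP, add_assoc, ← map_add]
    exact ((Equiv.addLeft k).tsum_eq fun m => f (y + integerVector m)).symm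
  refine ⟨isQuotientMap_toTorus.lift P hperiodic, fun y => ?_⟩
  rw [← hP]
  exact DFunLike.congr_fun (isQuotientMap_toTorus.lift_comp P hperiodic) y

lemma fourierChar_neg_inner_add_integerVector (y : EuclideanSpace ℝ d) (k m : d → ℤ) :
    𝐞 (-⟪y + integerVector m, integerVector k⟫_ℝ) = 𝐞 (-⟪y, integerVector k⟫_ℝ) := by
  have h : toTorus (y + integerVector m) = toTorus y :=
    (toTorus_eq_toTorus_iff.2 ⟨m, rfl⟩).symm
  apply Circle.coe_injective
  rw [← inner_neg_right, ← inner_neg_right, ← map_neg, ← mFourier_toTorus, ← mFourier_toTorus, h]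

lemma mFourierCoeff_eq_fourier_of_toTorus_eq_tsum {E : Type*} [NormedAddCommGroup E]
    [NormedSpace ℂ E] {f : EuclideanSpace ℝ d → E} (hf : Integrable f) {F : UnitAddTorus d → E}
    (hF : ∀ y, F (toTorus y) = ∑' m, f (y + integerVector m)) (k : d → ℤ) :
    UnitAddTorus.mFourierCoeff F k = 𝓕 f (integerVector k) := by
  let g : EuclideanSpace ℝ d → E := fun y => 𝐞 (-⟪y, integerVector k⟫_ℝ) • f y
  have hg : Integrable g := (Real.fourierIntegral_convergent_iff (integerVector k)).2 hf
  have hg_norm : Summable fun m => ∫ y in unitCube d, ‖g (y + integerVector m)‖ :=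
    (hasSum_setIntegral_unitCube_add hg.norm).summable
  calc UnitAddTorus.mFourierCoeff F k
      = ∫ y in unitCube d, 𝐞 (-⟪y, integerVector k⟫_ℝ) • F (toTorus y) :=
        mFourierCoeff_eq_setIntegral_unitCube F k
    _ = ∫ y in unitCube d, ∑' m, g (y + integerVector m) := by
        simp only [g, hF, fourierChar_neg_inner_add_integerVector, Circle.smul_def,
          tsum_const_smul'']
    _ = ∑' m, ∫ y in unitCube d, g (y + integerVector m) :=
        (integral_tsum_of_summable_integral_norm
          (fun m => (hg.comp_add_right _).integrableOn) hg_norm).symm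
    _ = ∫ y, g y := (hasSum_setIntegral_unitCube_add hg).tsum_eq
    _ = 𝓕 f (integerVector k) := (Real.fourier_eq f _).symm

theorem tsum_add_integerVector_eq_tsum_fourier {f : C(EuclideanSpace ℝ d, ℂ)}
    (hf : ∀ K : Compacts (EuclideanSpace ℝ d), Summable fun m =>
      ‖(f.comp (ContinuousMap.addRight (integerVector m))).restrict K‖)
    (hfourier : Summable fun k => 𝓕 (f : EuclideanSpace ℝ d → ℂ) (integerVector k))
    (y : EuclideanSpace ℝ d) :
    ∑' m, f (y + integerVector m) =
      ∑' k, 𝓕 (f : EuclideanSpace ℝ d → ℂ) (integerVector k) * 𝐞 ⟪y, integerVector k⟫_ℝ := by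
  obtain ⟨F, hF⟩ := exists_continuousMap_toTorus_eq_tsum hf
  have hcoeff := mFourierCoeff_eq_fourier_of_toTorus_eq_tsum
    (integrable_of_summable_norm_restrict_integerVector hf) hF
  have hseries := UnitAddTorus.hasSum_mFourier_series_apply_of_summable
    (hfourier.congr fun k => (hcoeff k).symm) (toTorus y)
  simpa only [hF, hcoeff, mFourier_toTorus, smul_eq_mul] using hseries.tsum_eq.symm

end Poisson

section LinearMaps

variable {V W E : Type*} [NormedAddCommGroup V] [NormedAddCommGroup W] [NormedAddCommGroup E]

lemma isBigO_rpow_comp_linearMap_cocompact [NormedSpace ℝ V] [NormedSpace ℝ W]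
    [FiniteDimensional ℝ V] {f : W → E} {b : ℝ} (hb : 0 ≤ b)
    (hf : f =O[cocompact W] fun w => ‖w‖ ^ (-b)) {T : V →ₗ[ℝ] W}
    (hT : Function.Injective T) :
    (fun v => f (T v)) =O[cocompact V] fun v => ‖v‖ ^ (-b) := by
  obtain ⟨K, hK, hKT⟩ := T.exists_antilipschitzWith (LinearMap.ker_eq_bot.2 hT)
  refine (hf.comp_tendsto
    (LinearMap.isClosedEmbedding_of_injective
      (LinearMap.ker_eq_bot.2 hT)).tendsto_cocompact).trans (.of_bound (K ^ b) ?_)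
  have : ProperSpace V := FiniteDimensional.proper_real V
  filter_upwards [tendsto_norm_cocompact_atTop.eventually_gt_atTop 0] with v hv
  have hvT : ‖v‖ / K ≤ ‖T v‖ := by
    rw [div_le_iff₀' (by positivity)]
    simpa using hKT.le_mul_dist v 0
  calc ‖‖T v‖ ^ (-b)‖ = ‖T v‖ ^ (-b) := norm_of_nonneg (by positivity)
    _ ≤ (‖v‖ / K) ^ (-b) := rpow_le_rpow_of_nonpos (by positivity) hvT (by linarith)
    _ = K ^ b * ‖‖v‖ ^ (-b)‖ := by
        rw [norm_of_nonneg (by positivity), div_rpow hv.le K.coe_nonneg,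
          rpow_neg K.coe_nonneg]
        field_simp

lemma injective_of_inner_map_map_eq [InnerProductSpace ℝ V] {T S : V →ₗ[ℝ] V}
    (hTS : ∀ v w, ⟪T v, S w⟫_ℝ = ⟪v, w⟫_ℝ) : Function.Injective T :=
  (injective_iff_map_eq_zero T).2 fun v hv => by
    simpa [hv, eq_comm (a := (0 : ℝ))] using hTS v v

lemma fourier_comp_linearMap [InnerProductSpace ℝ V] [FiniteDimensional ℝ V] [MeasurableSpace V]
    [BorelSpace V] [NormedSpace ℂ E] {T S : V →ₗ[ℝ] V} (hTS : ∀ v w, ⟪T v, S w⟫_ℝ = ⟪v, w⟫_ℝ)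
    (f : V → E) (w : V) :
    𝓕 (fun v => f (T v)) w = |T.det|⁻¹ • 𝓕 f (S w) := by
  have hinj : Function.Injective T := injective_of_inner_map_map_eq hTS
  have hdet : LinearMap.det T ≠ 0 := (LinearMap.isUnit_iff_ker_eq_bot T |>.2
    (LinearMap.ker_eq_bot.2 hinj) |>.map LinearMap.det).ne_zero
  have hemb : MeasurableEmbedding T :=
    (LinearMap.isClosedEmbedding_of_injective (LinearMap.ker_eq_bot.2 hinj)).measurableEmbedding
  calc 𝓕 (fun v => f (T v)) w = ∫ v, 𝐞 (-⟪T v, S w⟫_ℝ) • f (T v) := by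
        simp only [Real.fourier_eq, hTS]
    _ = ∫ u, 𝐞 (-⟪u, S w⟫_ℝ) • f u ∂(volume.map T) :=
        (hemb.integral_map fun u => 𝐞 (-⟪u, S w⟫_ℝ) • f u).symm
    _ = |T.det|⁻¹ • 𝓕 f (S w) := by
        rw [Measure.map_linearMap_addHaar_eq_smul_addHaar volume hdet, integral_smul_measure,
          ENNReal.toReal_ofReal (abs_nonneg _), abs_inv, Real.fourier_eq]

end LinearMaps

section MatrixLattice

variable {d : Type*} [Fintype d] [DecidableEq d] {A : Matrix d d ℝ}

lemma inner_toEuclideanLin_transpose_inv (hA : IsUnit A.det) (v w : EuclideanSpace ℝ d) :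
    ⟪A.toEuclideanLin v, A⁻¹.transpose.toEuclideanLin w⟫_ℝ = ⟪v, w⟫_ℝ := by
  have hinv : A⁻¹.toEuclideanLin (A.toEuclideanLin v) = v := by
    rw [← LinearMap.comp_apply, ← Matrix.toLpLin_mul_same, Matrix.nonsing_inv_mul A hA]
    simp
  rw [← Matrix.conjTranspose_eq_transpose_of_trivial,
    Matrix.toEuclideanLin_conjTranspose_eq_adjoint, LinearMap.adjoint_inner_right, hinv]

lemma injective_toEuclideanLin (hA : IsUnit A.det) : Function.Injective A.toEuclideanLin :=
  injective_of_inner_map_map_eq (inner_toEuclideanLin_transpose_inv hA)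

lemma det_toEuclideanLin (A : Matrix d d ℝ) : A.toEuclideanLin.det = A.det := by
  rw [Matrix.toEuclideanLin_eq_toLin_orthonormal, LinearMap.det_toLin]

theorem tsum_lattice_eq_tsum_fourier_of_rpow_decay (hA : IsUnit A.det)
    {f : EuclideanSpace ℝ d → ℂ} (hf : Continuous f) {b : ℝ} (hb : Fintype.card d < b)
    (hdecay : f =O[cocompact _] fun v => ‖v‖ ^ (-b))
    (hfourier : 𝓕 f =O[cocompact _] fun v => ‖v‖ ^ (-b)) :
    ∑' m, f (A.toEuclideanLin (integerVector m)) =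
      |A.det|⁻¹ * ∑' k, 𝓕 f (A⁻¹.transpose.toEuclideanLin (integerVector k)) := by
  have hb0 : 0 ≤ b := (Nat.cast_nonneg _).trans hb.le
  have hA' : IsUnit A⁻¹.transpose.det := by
    rw [Matrix.det_transpose]
    exact Matrix.isUnit_nonsing_inv_det A hA
  let g : C(EuclideanSpace ℝ d, ℂ) := ⟨fun v => f (A.toEuclideanLin v),
    hf.comp (LinearMap.continuous_of_finiteDimensional _)⟩
  have hg : ∀ w, 𝓕 (g : EuclideanSpace ℝ d → ℂ) w =
      (|A.det|⁻¹ : ℝ) * 𝓕 f (A⁻¹.transpose.toEuclideanLin w) := fun w => by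
    rw [← Complex.real_smul, ← det_toEuclideanLin]
    exact fourier_comp_linearMap (inner_toEuclideanLin_transpose_inv hA) f w
  have hg_decay : g =O[cocompact _] fun v => ‖v‖ ^ (-b) :=
    isBigO_rpow_comp_linearMap_cocompact hb0 hdecay (injective_toEuclideanLin hA)
  have hfourier_summable : Summable fun k => 𝓕 (g : EuclideanSpace ℝ d → ℂ) (integerVector k) := by
    simp only [hg]
    exact (summable_comp_integerVector_of_rpow_decay hb (isBigO_rpow_comp_linearMap_cocompact hb0
      hfourier (injective_toEuclideanLin hA'))).mul_left _
  have hpoisson := tsum_add_integerVector_eq_tsum_fourier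
    (summable_norm_restrict_integerVector_of_rpow_decay hb hg_decay) hfourier_summable 0
  simp only [hg, tsum_mul_left, zero_add, inner_zero_left, AddChar.map_zero_eq_one,
    Circle.coe_one, mul_one] at hpoisson
  exact hpoisson

end MatrixLattice

section Gaussian

lemma isBigO_exp_neg_pi_mul_norm_sq_cocompact {V : Type*} [NormedAddCommGroup V]
    [ProperSpace V] (s : ℝ) :
    (fun v : V => rexp (-π * ‖v‖ ^ 2)) =O[cocompact V] fun v => ‖v‖ ^ s := by
  simpa [Function.comp_def] using
    (rexp_neg_quadratic_isLittleO_rpow_atTop (neg_lt_zero.2 pi_pos) 0 s).isBigO.comp_tendsto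
      (tendsto_norm_cocompact_atTop (E := V))

lemma fourier_exp_neg_pi_mul_norm_sq {V : Type*} [NormedAddCommGroup V] [InnerProductSpace ℝ V]
    [FiniteDimensional ℝ V] [MeasurableSpace V] [BorelSpace V] :
    𝓕 (fun v : V => (rexp (-π * ‖v‖ ^ 2) : ℂ)) = fun v => (rexp (-π * ‖v‖ ^ 2) : ℂ) := by
  have hpi : (π : ℂ) ≠ 0 := Complex.ofReal_ne_zero.2 pi_ne_zero
  ext w
  have h := fourier_gaussian_innerProductSpace (b := π) (by simpa using pi_pos) w
  push_cast
  rw [h, div_self hpi, Complex.one_cpow, one_mul]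
  congr 1
  field_simp

variable {d : Type*} [Fintype d] [DecidableEq d]

theorem tsum_exp_neg_pi_mul_norm_sq_lattice {A : Matrix d d ℝ} (hA : IsUnit A.det) :
    ∑' m, rexp (-π * ‖A.toEuclideanLin (integerVector m)‖ ^ 2) =
      |A.det|⁻¹ * ∑' m, rexp (-π * ‖A⁻¹.transpose.toEuclideanLin (integerVector m)‖ ^ 2) := by
  let f : EuclideanSpace ℝ d → ℂ := fun v => rexp (-π * ‖v‖ ^ 2)
  have hself : 𝓕 f = f := fourier_exp_neg_pi_mul_norm_sq
  have hdecay : f =O[cocompact _] fun v => ‖v‖ ^ (-(Fintype.card d + 1 : ℝ)) :=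
    Complex.isBigO_ofReal_left.2 (isBigO_exp_neg_pi_mul_norm_sq_cocompact _)
  have hpoisson := tsum_lattice_eq_tsum_fourier_of_rpow_decay hA (f := f) (by fun_prop)
    (lt_add_one _) hdecay (hself.symm ▸ hdecay)
  rw [hself] at hpoisson
  simp only [f] at hpoisson
  exact_mod_cast hpoisson

lemma norm_sq_toEuclideanLin_diagonal_sqrt_mul (A : Matrix d d ℝ) {x : d → ℝ} (hx : ∀ k, 0 ≤ x k)
    (m : d → ℤ) :
    ‖(Matrix.diagonal (fun k => √(x k)) * A).toEuclideanLin (integerVector m)‖ ^ 2 =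
      ∑ k, x k * (A.mulVec (fun i => (m i : ℝ)) k) ^ 2 := by
  rw [EuclideanSpace.real_norm_sq_eq]
  refine Finset.sum_congr rfl fun k _ => ?_
  rw [Matrix.toLpLin_apply, ← Matrix.mulVec_mulVec, PiLp.toLp_apply,
    Matrix.mulVec_diagonal, mul_pow, sq_sqrt (hx k)]
  rfl

lemma transpose_inv_diagonal_sqrt_mul (A : Matrix d d ℝ) {x : d → ℝ} (hx : ∀ k, 0 < x k) :
    (Matrix.diagonal (fun k => √(x k)) * A)⁻¹.transpose =
      Matrix.diagonal (fun k => √(x k)⁻¹) * A⁻¹.transpose := by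
  have hinv : (Matrix.diagonal fun k => √(x k))⁻¹ = Matrix.diagonal fun k => √(x k)⁻¹ := by
    refine Matrix.inv_eq_left_inv ?_
    rw [Matrix.diagonal_mul_diagonal, ← Matrix.diagonal_one]
    congr 1 with k
    rw [sqrt_inv, inv_mul_cancel₀ (sqrt_ne_zero'.2 (hx k))]
  rw [Matrix.mul_inv_rev, hinv, Matrix.transpose_mul, Matrix.diagonal_transpose]

lemma inv_abs_det_diagonal_sqrt_mul (A : Matrix d d ℝ) {x : d → ℝ} (hx : ∀ k, 0 ≤ x k) :
    |(Matrix.diagonal (fun k => √(x k)) * A).det|⁻¹ =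
      |A.det|⁻¹ * (∏ k, x k) ^ (-(1 : ℝ) / 2) := by
  have hprod : 0 ≤ ∏ k, x k := Finset.prod_nonneg fun k _ => hx k
  rw [Matrix.det_mul, Matrix.det_diagonal, ← Real.sqrt_prod _ fun k _ => hx k, abs_mul,
    abs_of_nonneg (sqrt_nonneg _), mul_inv_rev, neg_div, rpow_neg hprod, ← sqrt_eq_rpow]

end Gaussian

theorem theta_functional_equation_general {d : Type*} [Fintype d] [DecidableEq d]
    {A : Matrix d d ℝ} (hA : IsUnit A.det) {x : d → ℝ} (hx : ∀ k, 0 < x k) :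
    (∑' m : d → ℤ, rexp (-π * ∑ k, x k * (A.mulVec (fun i => (m i : ℝ)) k) ^ 2)) =
      |A.det|⁻¹ * (∏ k, x k) ^ (-(1 : ℝ) / 2) *
        ∑' m : d → ℤ, rexp (-π * ∑ k, (x k)⁻¹ *
          ((A⁻¹).transpose.mulVec (fun i => (m i : ℝ)) k) ^ 2) := by
  have hdet : IsUnit (Matrix.diagonal (fun k => √(x k)) * A).det := by
    rw [Matrix.det_mul, Matrix.det_diagonal]
    exact (Finset.prod_ne_zero_iff.2 fun k _ => sqrt_ne_zero'.2 (hx k)).isUnit.mul hA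
  have hnorm := norm_sq_toEuclideanLin_diagonal_sqrt_mul A fun k => (hx k).le
  have hnorm_dual := norm_sq_toEuclideanLin_diagonal_sqrt_mul A⁻¹.transpose
    fun k => (inv_pos.2 (hx k)).le
  simpa only [inv_abs_det_diagonal_sqrt_mul A fun k => (hx k).le,
    transpose_inv_diagonal_sqrt_mul A hx, hnorm, hnorm_dual]
    using tsum_exp_neg_pi_mul_norm_sq_lattice hdet

/-- The theta function of a full-rank lattice `L = A(ℤⁿ)` satisfies
`Θ_L(x) = vol(ℝⁿ/L)⁻¹ (x₁⋯xₙ)^{−1/2} Θ_{L*}(1/x)`. -/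
theorem theta_functional_equation (n : ℕ) (A : Matrix (Fin n) (Fin n) ℝ) (hA : IsUnit A.det)
    (x : Fin n → ℝ) (hx : ∀ k, 0 < x k) :
    (∑' m : Fin n → ℤ,
        Real.exp (-π * ∑ k, x k * (A.mulVec (fun i => (m i : ℝ)) k) ^ 2)) =
      |A.det|⁻¹ * (∏ k, x k) ^ (-(1 : ℝ) / 2) *
        ∑' m : Fin n → ℤ,
          Real.exp (-π * ∑ k, (x k)⁻¹ *
            ((A⁻¹).transpose.mulVec (fun i => (m i : ℝ)) k) ^ 2) :=
  theta_functional_equation_general hA hx
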